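/- Let $E$ be a real inner product space, let $o, c \in E$, and let $0 < \omega_0 \le R$ be real numbers such that the closed ball of radius $\omega_0$ about $o$ is contained in the closed ball of radius $R$ about $c$. Then for every point $p$ with $\|p - c\| = R$ and $p \ne o$ one has $\langle p - c, p - o \rangle \ge \omega_0 \, \|p - o\|$; equivalently, the cosine of the angle at $p$ between the outer normal direction $(p-c)/R$ and the radial direction $(p-o)/\|p-o\|$ is at least $\omega_0 / R = \omega_0 k$, where $k = 1/R$. -/

import Mathlib

/-- The angle lemma: if the closed ball of radius `ω₀` about `o` is contained in the
closed ball of radius `R` about `c`, then for every point `p` on the sphere of radius `R`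
about `c` with `p ≠ o`, one has `⟪p - c, p - o⟫ ≥ ω₀ ‖p - o‖`. -/
theorem stmt_0 {E : Type*} [NormedAddCommGroup E] [InnerProductSpace ℝ E]
    (o c : E) (ω₀ R : ℝ) (hω₀ : 0 < ω₀) (hωR : ω₀ ≤ R)
    (hball : Metric.closedBall o ω₀ ⊆ Metric.closedBall c R)
    (p : E) (hp : ‖p - c‖ = R) (hpo : p ≠ o) :
    ω₀ * ‖p - o‖ ≤ inner ℝ (p - c) (p - o) := by
  have hv : ‖o - c‖ ≤ R - ω₀ := by
    by_cases h : o - c = 0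
    · rw [h, norm_zero]; linarith
    have hn : 0 < ‖o - c‖ := norm_pos_iff.mpr h
    have hm : o + (ω₀ / ‖o - c‖) • (o - c) ∈ Metric.closedBall o ω₀ := by
      rw [mem_closedBall_iff_norm, add_sub_cancel_left, norm_smul, Real.norm_eq_abs,
        abs_of_pos (div_pos hω₀ hn), div_mul_cancel₀ _ hn.ne']
    have h2 := hball hm
    have e : o + (ω₀ / ‖o - c‖) • (o - c) - c = (1 + ω₀ / ‖o - c‖) • (o - c) := by
      rw [add_smul, one_smul]; abel
    rw [mem_closedBall_iff_norm, e, norm_smul, Real.norm_eq_abs,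
      abs_of_pos (by positivity), add_mul, one_mul, div_mul_cancel₀ _ hn.ne'] at h2
    linarith
  have h3 := norm_sub_sq_real (p - c) (p - o)
  have e : (p - c) - (p - o) = o - c := by abel
  rw [e, hp] at h3
  have h4 : ‖o - c‖ ^ 2 ≤ (R - ω₀) ^ 2 := pow_le_pow_left₀ (norm_nonneg _) hv 2
  nlinarith [sq_nonneg (‖p - o‖ - ω₀), mul_nonneg hω₀.le (sub_nonneg.mpr hωR)]
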